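/- For every n ≥ 1, Σ over all compositions (p_1,…,p_k) of n of the term (n!/(p_1!·⋯·p_k!))·w(p_1,…,p_k) equals Σ_{i=0}^{n−1} n!/i!, where the weight is w(p_1) = p_1 for compositions of length k = 1, and w(p_1,…,p_k) = p_1·(p_2−1)·⋯·(p_{k−1}−1)·p_k for compositions of length k ≥ 2. -/

import Mathlib

/-- The weight of a composition `(p₁,…,p_k)`: `w(p₁) = p₁` for `k = 1`, and
`w(p₁,…,p_k) = p₁·(p₂-1)·⋯·(p_{k-1}-1)·p_k` for `k ≥ 2`. -/
def w (l : List ℕ) : ℕ :=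
  match l with
  | [] => 1
  | [p] => p
  | p :: rest => p * (rest.dropLast.map fun q => q - 1).prod * rest.getLastD 1

/-!
Divide by `n!`. The numbers `(q-1)/q!`, `q ≥ 1`, form a probability distribution with tails
`∑_{r ≥ q} (r-1)/r! = 1/(q-1)! = q/q!`, so after normalisation all blocks but the first carry the
weights of a renewal process: every block except the last has exactly its given length, while the
last one is only known to be at least as long as the part of it that is seen. The compositions of
`m` are the possible outcomes of such a process observed up to time `m`, so their total weight is
`1`. Summing over the blocks after the first therefore leaves only the weight `p/p! = 1/(p-1)!` of
the first block, and `p` runs through `1, …, n`.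
-/

open Finset
open scoped Nat

/-- The composition of `n + 1` whose first block is `p + 1` and whose remaining blocks are those of
a given composition of `n - p`; it splits a sum over compositions according to the first block. -/
def consBlock (n : ℕ) (x : (p : Fin (n + 1)) × Composition (n - p)) : Composition (n + 1) where
  blocks := (x.1 + 1) :: x.2.blocks
  blocks_pos := by simpa using fun _ => x.2.blocks_pos
  blocks_sum := by
    rw [List.sum_cons, x.2.blocks_sum]
    omega

lemma consBlock_injective (n : ℕ) : Function.Injective (consBlock n) := by
  rintro ⟨p, c⟩ ⟨q, d⟩ h
  obtain ⟨hpq, hcd⟩ := List.cons.inj (congrArg Composition.blocks h)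
  obtain rfl : p = q := Fin.ext (Nat.succ_injective hpq)
  obtain rfl : c = d := Composition.ext hcd
  rfl

lemma consBlock_surjective (n : ℕ) : Function.Surjective (consBlock n) := by
  rintro ⟨_ | ⟨a, l⟩, hpos, hsum⟩
  · simp at hsum
  · obtain ⟨p, rfl⟩ := Nat.exists_eq_succ_of_ne_zero (hpos List.mem_cons_self).ne'
    rw [List.sum_cons] at hsum
    exact ⟨⟨⟨p, by omega⟩, ⟨l, fun h => hpos (List.mem_cons_of_mem _ h), by grind⟩⟩, rfl⟩

lemma sum_composition_succ {M : Type*} [AddCommMonoid M] (n : ℕ) (f : List ℕ → M) :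
    ∑ c : Composition (n + 1), f c.blocks =
      ∑ p ∈ range (n + 1), ∑ c : Composition (n - p), f ((p + 1) :: c.blocks) := by
  rw [← Function.Bijective.sum_comp ⟨consBlock_injective n, consBlock_surjective n⟩,
    Fintype.sum_sigma, sum_range]
  rfl

lemma sum_composition_zero {M : Type*} [AddCommMonoid M] (f : List ℕ → M) :
    ∑ c : Composition 0, f c.blocks = f [] := by
  have blocks_eq (c : Composition 0) : c.blocks = [] := c.blocks_eq_nil.2 rfl
  simp [blocks_eq, composition_card]

/-- The product of `g q` over all blocks `q` but the last, times `h q` for the last block. When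
`g q` and `h q` are the probabilities that a waiting time equals `q` and is at least `q`, this is
the probability that a renewal process observed for a fixed time shows the given blocks. -/
def renewalWeight {R : Type*} [MulOneClass R] (g h : ℕ → R) : List ℕ → R
  | [] => 1
  | [q] => h q
  | q :: r :: l => g q * renewalWeight g h (r :: l)

lemma renewalWeight_cons {R : Type*} [MulOneClass R] (g h : ℕ → R) (q : ℕ) {l : List ℕ}
    (hl : l ≠ []) : renewalWeight g h (q :: l) = g q * renewalWeight g h l := by
  obtain ⟨r, l, rfl⟩ := List.exists_cons_of_ne_nil hl
  rfl

lemma natCast_renewalWeight_div {K : Type*} [Semifield K] (g h k : ℕ → ℕ) (l : List ℕ) :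
    ((renewalWeight g h l : ℕ) : K) / ((l.map k).prod : ℕ) =
      renewalWeight (fun q => (g q : K) / k q) (fun q => (h q : K) / k q) l := by
  induction l with
  | nil => simp [renewalWeight]
  | cons q l ih =>
    rcases eq_or_ne l [] with rfl | hl
    · simp [renewalWeight]
    · rw [renewalWeight_cons _ _ _ hl, renewalWeight_cons _ _ _ hl, ← ih, div_mul_div_comm,
        List.map_cons, List.prod_cons, Nat.cast_mul, Nat.cast_mul]

theorem sum_renewalWeight {R : Type*} [Semiring R] {g h : ℕ → R}
    (hgh : ∀ n, ∑ p ∈ range n, g (p + 1) + h (n + 1) = 1) (n : ℕ) :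
    ∑ c : Composition n, renewalWeight g h c.blocks = 1 := by
  induction n using Nat.strong_induction_on with
  | _ n ih =>
    rcases n with _ | n
    · exact sum_composition_zero _
    have several_blocks : ∀ p ∈ range n,
        ∑ c : Composition (n - p), renewalWeight g h ((p + 1) :: c.blocks) = g (p + 1) := by
      intro p hp
      have blocks_ne_nil (c : Composition (n - p)) : c.blocks ≠ [] :=
        mt c.blocks_eq_nil.1 (Nat.sub_ne_zero_of_lt (mem_range.1 hp))
      simp only [renewalWeight_cons _ _ _ (blocks_ne_nil _)]
      rw [← mul_sum, ih (n - p) (by omega), mul_one]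
    have one_block : ∑ c : Composition (n - n), renewalWeight g h ((n + 1) :: c.blocks) =
        h (n + 1) := by
      rw [Nat.sub_self]
      exact sum_composition_zero fun l => renewalWeight g h ((n + 1) :: l)
    rw [sum_composition_succ, sum_range_succ, sum_congr rfl several_blocks, one_block, hgh]

lemma succ_div_factorial_succ (p : ℕ) : ((p + 1 : ℕ) : ℚ) / (p + 1)! = 1 / p ! := by
  rw [Nat.factorial_succ, Nat.cast_mul, div_mul_cancel_left₀ (by positivity), one_div]

lemma sum_div_factorial_succ_add (n : ℕ) :
    ∑ p ∈ range n, (p : ℚ) / (p + 1)! + ((n + 1 : ℕ) : ℚ) / (n + 1)! = 1 := by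
  have telescoping_term (p : ℕ) : (p : ℚ) / (p + 1)! = 1 / (p ! : ℚ) - 1 / (p + 1)! := by
    rw [← succ_div_factorial_succ]
    push_cast
    ring
  simp only [telescoping_term, succ_div_factorial_succ]
  rw [sum_range_sub' fun p => 1 / (p ! : ℚ)]
  simp

lemma w_cons (p : ℕ) (l : List ℕ) :
    w (p :: l) = p * renewalWeight (fun q => q - 1) (fun q => q) l := by
  have renewalWeight_eq : renewalWeight (fun q => q - 1) (fun q => q) l =
      (l.dropLast.map fun q => q - 1).prod * l.getLastD 1 := by
    induction l with
    | nil => rfl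
    | cons q l ih =>
      rcases l with _ | ⟨r, l⟩
      · simp [renewalWeight]
      · simp [renewalWeight, ih, mul_assoc]
  rcases l with _ | ⟨q, l⟩
  · simp [w, renewalWeight]
  · rw [w, renewalWeight_eq, mul_assoc]
    simp

lemma sum_w_div_prod_factorial (n : ℕ) :
    ∑ c : Composition (n + 1), (w c.blocks : ℚ) / ((c.blocks.map Nat.factorial).prod : ℕ) =
      ∑ i ∈ range (n + 1), 1 / (i ! : ℚ) := by
  have w_div (p : ℕ) (l : List ℕ) :
      (w ((p + 1) :: l) : ℚ) / ((((p + 1) :: l).map Nat.factorial).prod : ℕ) =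
        1 / p ! * renewalWeight (fun q => ((q - 1 : ℕ) : ℚ) / q !) (fun q => (q : ℚ) / q !) l := by
    rw [w_cons, List.map_cons, List.prod_cons, Nat.cast_mul, Nat.cast_mul, ← div_mul_div_comm,
      succ_div_factorial_succ, natCast_renewalWeight_div]
  have total_weight (m : ℕ) : ∑ c : Composition m,
      renewalWeight (fun q => ((q - 1 : ℕ) : ℚ) / q !) (fun q => (q : ℚ) / q !) c.blocks = 1 :=
    sum_renewalWeight sum_div_factorial_succ_add m
  rw [sum_composition_succ n fun l => (w l : ℚ) / ((l.map Nat.factorial).prod : ℕ)]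
  simp only [w_div, ← mul_sum, total_weight, mul_one]

lemma prod_map_factorial_dvd_factorial_sum (l : List ℕ) : (l.map Nat.factorial).prod ∣ l.sum ! := by
  simpa [Fin.sum_univ_getElem, Fin.prod_univ_fun_getElem] using
    Nat.prod_factorial_dvd_factorial_sum univ fun i : Fin l.length => l[i]

/-- For every `n ≥ 1`, the sum over all compositions `(p₁,…,p_k)` of `n` of
`(n!/(p₁!⋯p_k!))·w(p₁,…,p_k)` equals `Σ_{i=0}^{n-1} n!/i!`. -/
theorem sum_composition_multinomial_weight (n : ℕ) (hn : 1 ≤ n) :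
    ∑ c : Composition n,
        (n.factorial / (c.blocks.map Nat.factorial).prod) * w c.blocks =
      ∑ i ∈ Finset.range n, n.factorial / i.factorial := by
  obtain ⟨m, rfl⟩ := Nat.exists_eq_add_of_le' hn
  have summand_left (c : Composition (m + 1)) :
      (((m + 1)! / (c.blocks.map Nat.factorial).prod * w c.blocks : ℕ) : ℚ) =
        (m + 1)! * ((w c.blocks : ℚ) / ((c.blocks.map Nat.factorial).prod : ℕ)) := by
    have prod_dvd := prod_map_factorial_dvd_factorial_sum c.blocks
    rw [c.blocks_sum] at prod_dvd
    rw [Nat.cast_mul, Nat.cast_div_charZero prod_dvd, div_mul_eq_mul_div, mul_div_assoc]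
  have summand_right : ∀ i ∈ range (m + 1),
      (((m + 1)! / i ! : ℕ) : ℚ) = (m + 1)! * (1 / (i ! : ℚ)) := by
    intro i hi
    rw [Nat.cast_div_charZero (Nat.factorial_dvd_factorial (mem_range.1 hi).le), mul_one_div]
  apply Nat.cast_injective (R := ℚ)
  rw [Nat.cast_sum, Nat.cast_sum, sum_congr rfl fun c _ => summand_left c,
    sum_congr rfl summand_right, ← mul_sum, ← mul_sum, sum_w_div_prod_factorial]
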